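/- Let m ≥ 1 and r ≥ 1 be integers, M ≥ 1, c_1,…,c_M > 0 fixed, and b_1,…,b_M > 0 with mean b̄ = (∑_{j=1}^M b_j)/M. Then ∫_0^∞ [1 − ∏_{j=1}^M (1 − S_m(b_j t) e^{−b_j t}) · ∏_{j=1}^M (1 − S_m(c_j t) e^{−c_j t})] t^{r−1} dt ≥ ∫_0^∞ [1 − (1 − S_m(b̄ t) e^{−b̄ t})^M · ∏_{j=1}^M (1 − S_m(c_j t) e^{−c_j t})] t^{r−1} dt. -/

import Mathlib

/-!
Each factor `1 - S_m(y) e^{-y}` is the probability `F_m(y)` that a Poisson variable of mean `y` is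
at least `m`. For `m = n + 1` its derivative is the Poisson weight `w_n(y) = e^{-y} y^n / n!`, and
`F_m / w_n = ∑ₖ n! / (n + 1 + k)! * y^(k+1)` is increasing, so the logarithmic derivative
`w_n / F_m` is decreasing and `F_m` is log-concave. Jensen's inequality for `log F_m` then compares
the two integrands pointwise. Both integrals converge, by the union bound `1 - ∏ F ≤ ∑ (1 - F)`
whose right-hand side integrates to a finite sum of Gamma integrals.
-/

open MeasureTheory

/-- `Sm m y` is the `m`-th partial sum of the exponential series. -/
noncomputable def Sm (m : ℕ) (y : ℝ) : ℝ := ∑ i ∈ Finset.range m, y ^ i / (Nat.factorial i)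

/-- The Poisson probability `ℙ(N = k)` for `N` of mean `y`. As a function of `y` it is also the
density of the Erlang law of shape `k + 1` and rate `1`. -/
noncomputable def poissonWeight (k : ℕ) (y : ℝ) : ℝ := y ^ k / k.factorial * Real.exp (-y)

/-- The distribution function at `y ≥ 0` of the Erlang law of shape `m` and rate `1`: the
probability that a unit-rate Poisson process has at least `m` points in `[0, y]`. For `m = 0` it is
constantly `1`. -/
noncomputable def erlangCDF (m : ℕ) (y : ℝ) : ℝ := 1 - Sm m y * Real.exp (-y)

section Erlang

variable {y : ℝ}

lemma poissonWeight_nonneg (k : ℕ) (hy : 0 ≤ y) : 0 ≤ poissonWeight k y := by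
  unfold poissonWeight; positivity

lemma poissonWeight_pos (k : ℕ) (hy : 0 < y) : 0 < poissonWeight k y := by
  unfold poissonWeight; positivity

lemma one_sub_erlangCDF (m : ℕ) (y : ℝ) :
    1 - erlangCDF m y = ∑ k ∈ Finset.range m, poissonWeight k y := by
  simp only [erlangCDF, Sm, poissonWeight, sub_sub_cancel, Finset.sum_mul]

lemma erlangCDF_succ (m : ℕ) (y : ℝ) :
    erlangCDF (m + 1) y = erlangCDF m y - poissonWeight m y := by
  have h := one_sub_erlangCDF (m + 1) y
  rw [Finset.sum_range_succ, ← one_sub_erlangCDF] at h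
  linarith

lemma hasSum_poissonWeight (y : ℝ) : HasSum (fun k => poissonWeight k y) 1 := by
  have h := (NormedSpace.expSeries_div_hasSum_exp y).mul_right (Real.exp (-y))
  rwa [← Real.exp_eq_exp_ℝ, ← Real.exp_add, add_neg_cancel, Real.exp_zero] at h

lemma hasSum_erlangCDF (m : ℕ) (y : ℝ) :
    HasSum (fun k => poissonWeight (k + m) y) (erlangCDF m y) := by
  have h := (hasSum_nat_add_iff' m).2 (hasSum_poissonWeight y)
  rwa [← one_sub_erlangCDF, sub_sub_cancel] at h

lemma erlangCDF_pos (m : ℕ) (hy : 0 < y) : 0 < erlangCDF m y :=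
  calc 0 < poissonWeight (0 + m) y := poissonWeight_pos _ hy
    _ ≤ erlangCDF m y :=
      le_hasSum (hasSum_erlangCDF m y) 0 fun _ _ => poissonWeight_nonneg _ hy.le

lemma erlangCDF_le_one (m : ℕ) (hy : 0 ≤ y) : erlangCDF m y ≤ 1 := by
  rw [← sub_nonneg, one_sub_erlangCDF]
  exact Finset.sum_nonneg fun k _ => poissonWeight_nonneg k hy

lemma continuous_erlangCDF (m : ℕ) : Continuous (erlangCDF m) := by
  unfold erlangCDF Sm; fun_prop

lemma hasDerivAt_exp_neg (y : ℝ) :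
    HasDerivAt (fun x : ℝ => Real.exp (-x)) (-Real.exp (-y)) y := by
  simpa only [mul_neg, mul_one] using (hasDerivAt_neg y).exp

lemma hasDerivAt_poissonWeight_succ (k : ℕ) (y : ℝ) :
    HasDerivAt (poissonWeight (k + 1)) (poissonWeight k y - poissonWeight (k + 1) y) y := by
  refine (((hasDerivAt_pow (k + 1) y).div_const _).mul (hasDerivAt_exp_neg y)).congr_deriv ?_
  simp only [poissonWeight, Nat.factorial_succ, Nat.add_sub_cancel]
  push_cast
  field_simp
  ring

lemma hasDerivAt_erlangCDF_succ (n : ℕ) (y : ℝ) :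
    HasDerivAt (erlangCDF (n + 1)) (poissonWeight n y) y := by
  induction n with
  | zero =>
    have h : erlangCDF (0 + 1) = fun x => 1 - Real.exp (-x) := by
      funext x; simp [erlangCDF, Sm]
    simpa [h, poissonWeight] using (hasDerivAt_exp_neg y).const_sub 1
  | succ n ih =>
    rw [funext (erlangCDF_succ (n + 1))]
    exact (ih.sub (hasDerivAt_poissonWeight_succ n y)).congr_deriv (sub_sub_cancel _ _)

lemma poissonWeight_add_div (n k : ℕ) (hy : y ≠ 0) :
    poissonWeight (k + n) y / poissonWeight n y
      = n.factorial / (k + n).factorial * y ^ k := by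
  have := Real.exp_ne_zero (-y)
  simp only [poissonWeight, pow_add]
  field_simp

lemma monotoneOn_erlangCDF_succ_div_poissonWeight (n : ℕ) :
    MonotoneOn (fun y => erlangCDF (n + 1) y / poissonWeight n y) (Set.Ioi 0) := by
  intro x hx y hy hxy
  rw [Set.mem_Ioi] at hx hy
  refine hasSum_le (fun k => ?_) ((hasSum_erlangCDF (n + 1) x).div_const _)
    ((hasSum_erlangCDF (n + 1) y).div_const _)
  rw [← Nat.succ_add_eq_add_succ, poissonWeight_add_div n _ hx.ne',
    poissonWeight_add_div n _ hy.ne']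
  gcongr

lemma antitoneOn_poissonWeight_div_erlangCDF_succ (n : ℕ) :
    AntitoneOn (fun y => poissonWeight n y / erlangCDF (n + 1) y) (Set.Ioi 0) := by
  intro x hx y hy hxy
  simp only [← inv_div (erlangCDF (n + 1) _)]
  exact inv_anti₀ (div_pos (erlangCDF_pos _ hx) (poissonWeight_pos _ hx))
    (monotoneOn_erlangCDF_succ_div_poissonWeight n hx hy hxy)

lemma concaveOn_log_erlangCDF (m : ℕ) :
    ConcaveOn ℝ (Set.Ioi 0) (fun y => Real.log (erlangCDF m y)) := by
  rcases m with _ | n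
  · simpa [erlangCDF, Sm] using concaveOn_const (0 : ℝ) (convex_Ioi (0 : ℝ))
  have hderiv : ∀ x ∈ Set.Ioi (0 : ℝ), HasDerivAt (fun y => Real.log (erlangCDF (n + 1) y))
      (poissonWeight n x / erlangCDF (n + 1) x) x := fun x hx =>
    (hasDerivAt_erlangCDF_succ n x).log (erlangCDF_pos _ hx).ne'
  refine AntitoneOn.concaveOn_of_deriv (convex_Ioi 0)
    (fun x hx => (hderiv x hx).continuousAt.continuousWithinAt) ?_ ?_ <;> rw [interior_Ioi]
  · exact fun x hx => (hderiv x hx).differentiableAt.differentiableWithinAt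
  · exact (antitoneOn_poissonWeight_div_erlangCDF_succ n).congr fun x hx => (hderiv x hx).deriv.symm

end Erlang

lemma prod_le_map_mean_pow_card_of_concaveOn_log {ι E : Type*} [AddCommGroup E] [Module ℝ E]
    {D : Set E} {g : E → ℝ} (hg : ConcaveOn ℝ D fun x => Real.log (g x))
    (hpos : ∀ x ∈ D, 0 < g x) {s : Finset ι} (hs : s.Nonempty) {b : ι → E}
    (hb : ∀ j ∈ s, b j ∈ D) :
    ∏ j ∈ s, g (b j) ≤ g ((s.card : ℝ)⁻¹ • ∑ j ∈ s, b j) ^ s.card := by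
  have hcard : (0 : ℝ) < s.card := by exact_mod_cast hs.card_pos
  have hweights : ∑ _j ∈ s, (s.card : ℝ)⁻¹ = 1 := by
    rw [Finset.sum_const, nsmul_eq_mul, mul_inv_cancel₀ hcard.ne']
  have hmean : (s.card : ℝ)⁻¹ • ∑ j ∈ s, b j ∈ D := by
    rw [Finset.smul_sum]
    exact hg.1.sum_mem (fun _ _ => by positivity) hweights hb
  have hjensen := hg.le_map_sum (fun _ _ => by positivity) hweights hb
  rw [← Finset.smul_sum, ← Finset.smul_sum, smul_eq_mul, inv_mul_le_iff₀ hcard,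
    ← Real.log_prod fun j hj => (hpos _ (hb j hj)).ne', ← Real.log_pow] at hjensen
  exact (Real.log_le_log_iff (Finset.prod_pos fun j hj => hpos _ (hb j hj))
    (pow_pos (hpos _ hmean) _)).1 hjensen

lemma one_sub_prod_le_sum_one_sub {ι R : Type*} [CommRing R] [PartialOrder R] [IsOrderedRing R]
    {s : Finset ι} {g : ι → R} (h0 : ∀ j ∈ s, 0 ≤ g j) (h1 : ∀ j ∈ s, g j ≤ 1) :
    1 - ∏ j ∈ s, g j ≤ ∑ j ∈ s, (1 - g j) := by
  induction s using Finset.cons_induction with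
  | empty => simp
  | cons a s ha ih =>
    rw [Finset.forall_mem_cons] at h0 h1
    rw [Finset.prod_cons, Finset.sum_cons]
    calc 1 - g a * ∏ j ∈ s, g j = (1 - g a) + g a * (1 - ∏ j ∈ s, g j) := by ring
      _ ≤ (1 - g a) + 1 * (1 - ∏ j ∈ s, g j) := by
        gcongr
        · exact sub_nonneg.2 (Finset.prod_le_one h0.2 h1.2)
        · exact h1.1
      _ ≤ (1 - g a) + ∑ j ∈ s, (1 - g j) := by
        rw [one_mul]
        gcongr
        exact ih h0.2 h1.2

section Integrability

variable {p : ℝ}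

lemma integrableOn_poissonWeight_mul_rpow (k : ℕ) {a : ℝ} (ha : 0 < a) (hp : -1 < p) :
    IntegrableOn (fun t => poissonWeight k (a * t) * t ^ p) (Set.Ioi 0) := by
  have hgamma : IntegrableOn (fun t : ℝ => t ^ (k + p) * Real.exp (-a * t ^ (1 : ℝ))) (Set.Ioi 0) :=
    integrableOn_rpow_mul_exp_neg_mul_rpow (by linarith [k.cast_nonneg (α := ℝ)]) one_pos ha
  refine IntegrableOn.congr_fun (hgamma.const_mul (a ^ k / k.factorial)) (fun t ht => ?_)
    measurableSet_Ioi
  simp only [poissonWeight, Real.rpow_add ht, Real.rpow_natCast, Real.rpow_one, mul_pow, neg_mul]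
  ring

lemma integrableOn_one_sub_erlangCDF_mul_rpow (m : ℕ) {a : ℝ} (ha : 0 < a) (hp : -1 < p) :
    IntegrableOn (fun t => (1 - erlangCDF m (a * t)) * t ^ p) (Set.Ioi 0) := by
  simp only [one_sub_erlangCDF, Finset.sum_mul]
  exact integrable_finsetSum _ fun k _ => integrableOn_poissonWeight_mul_rpow k ha hp

lemma integrableOn_one_sub_prod_erlangCDF_mul_rpow {ι : Type*} (m : ℕ) {s : Finset ι} {a : ι → ℝ}
    (ha : ∀ j ∈ s, 0 < a j) (hp : -1 < p) :
    IntegrableOn (fun t => (1 - ∏ j ∈ s, erlangCDF m (a j * t)) * t ^ p) (Set.Ioi 0) := by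
  have hbound : IntegrableOn (fun t => ∑ j ∈ s, (1 - erlangCDF m (a j * t)) * t ^ p) (Set.Ioi 0) :=
    integrable_finsetSum _ fun j hj => integrableOn_one_sub_erlangCDF_mul_rpow m (ha j hj) hp
  have hmeas : Measurable (fun t => (1 - ∏ j ∈ s, erlangCDF m (a j * t)) * t ^ p) := by
    have := (continuous_erlangCDF m).measurable
    fun_prop
  refine hbound.mono' hmeas.aestronglyMeasurable (ae_restrict_of_forall_mem measurableSet_Ioi ?_)
  intro t ht
  rw [Set.mem_Ioi] at ht
  have hnonneg : ∀ j ∈ s, 0 ≤ erlangCDF m (a j * t) := fun j hj =>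
    (erlangCDF_pos m (mul_pos (ha j hj) ht)).le
  have hle : ∀ j ∈ s, erlangCDF m (a j * t) ≤ 1 := fun j hj =>
    erlangCDF_le_one m (mul_pos (ha j hj) ht).le
  rw [Real.norm_of_nonneg (mul_nonneg (sub_nonneg.2 (Finset.prod_le_one hnonneg hle))
    (by positivity)), ← Finset.sum_mul]
  gcongr
  exact one_sub_prod_le_sum_one_sub hnonneg hle

end Integrability

theorem integral_ge_uniformized_general {ι κ : Type*} (m : ℕ) {p : ℝ} (hp : -1 < p)
    {s : Finset ι} (hs : s.Nonempty) {b : ι → ℝ} (hb : ∀ j ∈ s, 0 < b j)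
    {u : Finset κ} {c : κ → ℝ} (hc : ∀ j ∈ u, 0 < c j) :
    ∫ t in Set.Ioi (0 : ℝ),
        (1 - (∏ j ∈ s, erlangCDF m (b j * t)) * ∏ j ∈ u, erlangCDF m (c j * t)) * t ^ p
      ≥ ∫ t in Set.Ioi (0 : ℝ),
        (1 - erlangCDF m ((∑ j ∈ s, b j) / s.card * t) ^ s.card *
          ∏ j ∈ u, erlangCDF m (c j * t)) * t ^ p := by
  have hmean : 0 < (∑ j ∈ s, b j) / s.card :=
    div_pos (Finset.sum_pos hb hs) (by exact_mod_cast hs.card_pos)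
  have hintegrable : ∀ a : ι → ℝ, (∀ j ∈ s, 0 < a j) → IntegrableOn (fun t : ℝ =>
      (1 - (∏ j ∈ s, erlangCDF m (a j * t)) * ∏ j ∈ u, erlangCDF m (c j * t)) * t ^ p)
      (Set.Ioi 0) := fun a ha => by
    simpa only [Finset.prod_disjSum, Sum.elim_inl, Sum.elim_inr] using
      integrableOn_one_sub_prod_erlangCDF_mul_rpow m (s := s.disjSum u) (a := Sum.elim a c)
        (by simpa [or_imp, forall_and] using ⟨ha, hc⟩) hp
  refine setIntegral_mono_on
    (by simpa only [Finset.prod_const] using hintegrable (fun _ => _) fun _ _ => hmean)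
    (hintegrable b hb) measurableSet_Ioi fun t ht => ?_
  rw [Set.mem_Ioi] at ht
  have hjensen : ∏ j ∈ s, erlangCDF m (b j * t)
      ≤ erlangCDF m ((∑ j ∈ s, b j) / s.card * t) ^ s.card := by
    simpa only [smul_eq_mul, ← Finset.sum_mul, ← mul_assoc, inv_mul_eq_div] using
      prod_le_map_mean_pow_card_of_concaveOn_log (concaveOn_log_erlangCDF m)
        (fun _ => erlangCDF_pos m) hs (b := fun j => b j * t) fun j hj => mul_pos (hb j hj) ht
  gcongr
  exact Finset.prod_nonneg fun j hj => (erlangCDF_pos m (mul_pos (hc j hj) ht)).le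

theorem integral_ge_uniformized
    (m r M : ℕ) (hm : 1 ≤ m) (hr : 1 ≤ r) (hM : 1 ≤ M)
    (c : ℕ → ℝ) (hc : ∀ j, 1 ≤ j → 0 < c j)
    (b : ℕ → ℝ) (hb : ∀ j, 1 ≤ j → 0 < b j) :
    ∫ t in Set.Ioi (0 : ℝ),
        (1 - (∏ j ∈ Finset.Icc 1 M, (1 - Sm m (b j * t) * Real.exp (-(b j * t)))) *
          ∏ j ∈ Finset.Icc 1 M, (1 - Sm m (c j * t) * Real.exp (-(c j * t)))) * t ^ (r - 1)
      ≥ ∫ t in Set.Ioi (0 : ℝ),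
        (1 - (1 - Sm m (((∑ j ∈ Finset.Icc 1 M, b j) / M) * t) *
              Real.exp (-(((∑ j ∈ Finset.Icc 1 M, b j) / M) * t))) ^ M *
          ∏ j ∈ Finset.Icc 1 M, (1 - Sm m (c j * t) * Real.exp (-(c j * t)))) * t ^ (r - 1) := by
  simpa only [erlangCDF, Real.rpow_natCast, Nat.card_Icc, Nat.add_sub_cancel] using
    integral_ge_uniformized_general m (p := (r - 1 : ℕ))
      (neg_one_lt_zero.trans_le (Nat.cast_nonneg _))
      (Finset.nonempty_Icc.2 hM) (fun j hj => hb j (Finset.mem_Icc.1 hj).1)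
      (fun j hj => hc j (Finset.mem_Icc.1 hj).1)
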